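/- Let n, r ≥ 1, let a = diag(a₁, …, aₙ) be a diagonal n×n complex matrix with distinct diagonal entries, let b be an r×r complex matrix, F, G n×r complex matrices, fix an index i, and let eᵢ ∈ ℂⁿ be the i-th standard basis vector. Suppose u : ℂ → ℂⁿ, v : ℂ → ℂʳ and λ : ℂ → ℂ are differentiable at 0, with u(0) = eᵢ, v(0) = 0, λ(0) = aᵢ, and suppose that for all ε ≠ 0 in some punctured neighbourhood of 0: (a − λ(ε)Iₙ)u(ε) − F v(ε) = 0 and ε Gᵀu(ε) − ε b v(ε) + v(ε) = 0. Then v′(0) = −Gᵀeᵢ and (a − aᵢIₙ)u′(0) = λ′(0)eᵢ − FGᵀeᵢ; in particular, for every j ≠ i, the j-th component of u′(0) equals −(FGᵀ)ⱼᵢ/(aⱼ − aᵢ). -/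

import Mathlib

open Matrix Topology

/-- Expansion of a solution of the spectral-curve equations near the point
`yᵢ` (`z = ∞`, `λ = aᵢ`) of the spectral curve (Section 5 of the paper):
with `ε = z⁻¹` and `u(0) = eᵢ`, `v(0) = 0`, `λ(0) = aᵢ`, the equations
`(a - λ(ε))u(ε) - Fv(ε) = 0`, `εGᵀu(ε) - εbv(ε) + v(ε) = 0` on a punctured
neighbourhood of `0` force `v′(0) = -Gᵀeᵢ`,
`(a - aᵢI)u′(0) = λ′(0)eᵢ - FGᵀeᵢ`, and in particular
`u′(0)ⱼ = -(FGᵀ)ⱼᵢ/(aⱼ - aᵢ)` for `j ≠ i`. -/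
theorem stmt_13 (n r : ℕ) (hn : 1 ≤ n) (hr : 1 ≤ r)
    (a : Fin n → ℂ) (ha : Function.Injective a)
    (b : Matrix (Fin r) (Fin r) ℂ) (F G : Matrix (Fin n) (Fin r) ℂ)
    (i : Fin n)
    (u : ℂ → Fin n → ℂ) (v : ℂ → Fin r → ℂ) (lam : ℂ → ℂ)
    (hu : DifferentiableAt ℂ u 0) (hv : DifferentiableAt ℂ v 0)
    (hlam : DifferentiableAt ℂ lam 0)
    (hu0 : u 0 = Pi.single i 1) (hv0 : v 0 = 0) (hlam0 : lam 0 = a i)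
    (heq : ∀ᶠ ε in 𝓝[≠] (0 : ℂ),
      (Matrix.diagonal a - lam ε • 1).mulVec (u ε) - F.mulVec (v ε) = 0 ∧
      ε • Gᵀ.mulVec (u ε) - ε • b.mulVec (v ε) + v ε = 0) :
    deriv v 0 = -(Gᵀ.mulVec (Pi.single i 1))
    ∧ (Matrix.diagonal a - a i • 1).mulVec (deriv u 0)
        = deriv lam 0 • (Pi.single i 1 : Fin n → ℂ) - (F * Gᵀ).mulVec (Pi.single i 1)
    ∧ ∀ j, j ≠ i → deriv u 0 j = -((F * Gᵀ) j i) / (a j - a i) := by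
  have heq' : ∀ᶠ ε in 𝓝 (0 : ℂ),
      (Matrix.diagonal a - lam ε • 1).mulVec (u ε) - F.mulVec (v ε) = 0 ∧
      ε • Gᵀ.mulVec (u ε) - ε • b.mulVec (v ε) + v ε = 0 := by
    rw [eventually_nhdsWithin_iff] at heq
    filter_upwards [heq] with ε hε
    by_cases h : ε = 0
    · subst h
      refine ⟨?_, by simp [hv0]⟩
      rw [hu0, hv0, hlam0]
      ext j
      by_cases hj : j = i
      · subst hj
        simp [Matrix.sub_mulVec, Matrix.smul_mulVec, Matrix.mulVec_diagonal]
      · simp [Matrix.sub_mulVec, Matrix.smul_mulVec, Matrix.mulVec_diagonal, hj]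
    · exact hε h
  have hu' := hasDerivAt_pi.1 hu.hasDerivAt
  have hv' := hasDerivAt_pi.1 hv.hasDerivAt
  have hl' := hlam.hasDerivAt
  have key1 : deriv v 0 = -(Gᵀ.mulVec (Pi.single i 1)) := by
    ext k
    have h1 : HasDerivAt (fun ε => ∑ l, Gᵀ k l * u ε l) (∑ l, Gᵀ k l * deriv u 0 l) 0 :=
      HasDerivAt.fun_sum fun l _ => (hu' l).const_mul _
    have h2 : HasDerivAt (fun ε => ∑ l, b k l * v ε l) (∑ l, b k l * deriv v 0 l) 0 :=
      HasDerivAt.fun_sum fun l _ => (hv' l).const_mul _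
    have h3 := (((hasDerivAt_id (0 : ℂ)).fun_mul h1).fun_sub
      ((hasDerivAt_id (0 : ℂ)).fun_mul h2)).fun_add (hv' k)
    have h4 := h3.unique ((hasDerivAt_const (0 : ℂ) (0 : ℂ)).congr_of_eventuallyEq (by
      filter_upwards [heq'] with ε hε
      have := congrFun hε.2 k
      simpa [Matrix.mulVec, dotProduct] using this))
    simp [hu0, hv0, Pi.single_apply] at h4
    simp
    linear_combination h4
  have key2 : (Matrix.diagonal a - a i • 1).mulVec (deriv u 0)
        = deriv lam 0 • (Pi.single i 1 : Fin n → ℂ) - (F * Gᵀ).mulVec (Pi.single i 1) := by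
    have h5 : (F * Gᵀ).mulVec (Pi.single i 1) = - F.mulVec (deriv v 0) := by
      rw [key1, Matrix.mulVec_neg, neg_neg, Matrix.mulVec_mulVec]
    rw [h5]
    ext j
    have h2 : HasDerivAt (fun ε => ∑ l, F j l * v ε l) (∑ l, F j l * deriv v 0 l) 0 :=
      HasDerivAt.fun_sum fun l _ => (hv' l).const_mul _
    have h3 := (((hasDerivAt_const (0 : ℂ) (a j)).fun_sub hl').fun_mul (hu' j)).fun_sub h2
    have h4 := h3.unique ((hasDerivAt_const (0 : ℂ) (0 : ℂ)).congr_of_eventuallyEq (by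
      filter_upwards [heq'] with ε hε
      have := congrFun hε.1 j
      simp only [Matrix.sub_mulVec, Matrix.smul_mulVec, Matrix.one_mulVec, Pi.sub_apply,
        Matrix.mulVec_diagonal, Pi.smul_apply, smul_eq_mul, Pi.zero_apply] at this
      simp only [Matrix.mulVec, dotProduct] at this
      linear_combination this))
    rw [hu0, hlam0] at h4
    simp only [Matrix.sub_mulVec, Matrix.smul_mulVec, Matrix.one_mulVec, Pi.sub_apply,
        Matrix.mulVec_diagonal, Pi.smul_apply, smul_eq_mul, Pi.neg_apply]
    simp only [Matrix.mulVec, dotProduct]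
    linear_combination h4
  refine ⟨key1, key2, fun j hj => ?_⟩
  have h := congrFun key2 j
  have hne : a j - a i ≠ 0 := sub_ne_zero.2 fun h => hj (ha h)
  simp only [Matrix.sub_mulVec, Matrix.smul_mulVec, Matrix.one_mulVec, Pi.sub_apply,
        Matrix.mulVec_diagonal, Pi.smul_apply, smul_eq_mul, Matrix.mulVec_single_one,
        Matrix.col_apply, Pi.single_eq_of_ne hj] at h
  rw [eq_div_iff hne]
  linear_combination h
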